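/- arXiv:hep-th/0301187 — 7 statements merged into one kernel-verified Lean document; each statement's English description precedes it below -/
import Mathlib

section
/- Let n ≥ 2 be a natural number and let α, γ₁, …, γ_m be real numbers satisfying the constraint (n−1)(α² + Σ_{a=1}^m γ_a²) + (α + Σ_{a=1}^m γ_a)² = n together with the horizon condition α + (1/n) Σ_{a=1}^m γ_a ≥ 1. Then necessarily α = 1 and γ_a = 0 for all a = 1, …, m. -/
/-!
Writing `s = ∑ γ_a` and `q = ∑ γ_a²`, completing the square in `α` turns the left side of the
constraint into `n (α + s / n)² + (n - 1) (q + s² / n)`. The horizon condition makes the first term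
at least `n`, so the second, a positive combination of squares, has to vanish. Hence every `γ_a` is
zero, and what remains is `α² ≤ 1 ≤ α`.
-/

section

variable {K : Type*} [Field K]

theorem sub_one_mul_add_sq_eq {ν : K} (hν : ν ≠ 0) (α s q : K) :
    (ν - 1) * (α ^ 2 + q) + (α + s) ^ 2 =
      ν * (α + s / ν) ^ 2 + (ν - 1) * (q + s ^ 2 / ν) := by
  field_simp
  ring

variable [LinearOrder K] [IsStrictOrderedRing K]

theorem add_sq_div_nonpos_of_one_le_add_div {ν α s q : K} (hν : 1 < ν)
    (hcon : (ν - 1) * (α ^ 2 + q) + (α + s) ^ 2 ≤ ν) (hhor : 1 ≤ α + s / ν) :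
    q + s ^ 2 / ν ≤ 0 := by
  have hν_pos : 0 < ν := zero_lt_one.trans hν
  have horizon_term : ν ≤ ν * (α + s / ν) ^ 2 :=
    le_mul_of_one_le_right hν_pos.le (one_le_pow₀ hhor)
  rw [sub_one_mul_add_sq_eq hν_pos.ne'] at hcon
  have remainder : (ν - 1) * (q + s ^ 2 / ν) ≤ 0 := by linarith
  exact nonpos_of_mul_nonpos_right remainder (sub_pos.mpr hν)

theorem eq_one_of_mul_sq_le_self {ν α : K} (hν : 0 < ν) (hle : ν * α ^ 2 ≤ ν) (hα : 1 ≤ α) :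
    α = 1 := by
  have hsq : α ^ 2 ≤ 1 := (mul_le_iff_le_one_right hν).mp hle
  exact le_antisymm ((sq_le_one_iff₀ (zero_le_one.trans hα)).mp hsq) hα

theorem stmt_1_general {ι : Type*} [Fintype ι] {ν α : K} {γ : ι → K} (hν : 1 < ν)
    (hcon : (ν - 1) * (α ^ 2 + ∑ a, γ a ^ 2) + (α + ∑ a, γ a) ^ 2 ≤ ν)
    (hhor : 1 ≤ α + (∑ a, γ a) / ν) :
    α = 1 ∧ ∀ a, γ a = 0 := by
  have hν_pos : 0 < ν := zero_lt_one.trans hν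
  have sum_sq_nonneg : 0 ≤ ∑ a, γ a ^ 2 := Finset.sum_nonneg fun a _ => sq_nonneg (γ a)
  have sum_sq_eq_zero : ∑ a, γ a ^ 2 = 0 :=
    le_antisymm ((le_add_of_nonneg_right (by positivity)).trans
      (add_sq_div_nonpos_of_one_le_add_div hν hcon hhor)) sum_sq_nonneg
  have γ_eq_zero : ∀ a, γ a = 0 := by
    simpa [Finset.sum_eq_zero_iff_of_nonneg, sq_nonneg] using sum_sq_eq_zero
  have sum_eq_zero : ∑ a, γ a = 0 := Finset.sum_eq_zero fun a _ => γ_eq_zero a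
  rw [sum_eq_zero, zero_div, add_zero] at hhor
  rw [sum_sq_eq_zero, sum_eq_zero, add_zero, add_zero] at hcon
  have α_sq_le : ν * α ^ 2 ≤ ν := by linarith
  exact ⟨eq_one_of_mul_sq_le_self hν_pos α_sq_le hhor, γ_eq_zero⟩

end

/-- No-go theorem (algebraic part): if `n ≥ 2` and the exponents satisfy the
vacuum Einstein constraint `(n−1)(α² + Σγ_a²) + (α + Σγ_a)² = n` together with
the horizon condition `α + (1/n)Σγ_a ≥ 1`, then `α = 1` and all `γ_a = 0`
(the Schwarzschild black hole tensored with flat directions). -/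
theorem stmt_1 (n : ℕ) (hn : 2 ≤ n) (m : ℕ) (α : ℝ) (γ : Fin m → ℝ)
    (hcon : ((n : ℝ) - 1) * (α ^ 2 + ∑ a, (γ a) ^ 2) + (α + ∑ a, γ a) ^ 2 = n)
    (hhor : α + (1 / (n : ℝ)) * ∑ a, γ a ≥ 1) :
    α = 1 ∧ ∀ a, γ a = 0 := by
  rw [ge_iff_le, one_div_mul_eq_div] at hhor
  exact stmt_1_general (by exact_mod_cast hn) hcon.le hhor
end

section
/- Let n ≥ 2 be a natural number. There exist no real numbers α, γ₁, …, γ_m satisfying both (n−1)(2α² + Σ_{a=1}^m γ_a²) + (2α + Σ_{a=1}^m γ_a)² = n and (n+1)α + Σ_{a=1}^m γ_a ≥ n. -/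
/-!
Write `Q = (n - 1) * (α² + ∑ γ_a²) + (α + ∑ γ_a)²` and `L = n * α + ∑ γ_a`, so that the constraint
reads `Q = n` and, after clearing the denominator of `β`, the horizon criterion `α - β ≥ 1` reads
`L ≥ n`. Completing squares around `α = 1, γ = 0` writes `Q - 2 * L + n` as a sum of squares with
positive weights. Both conditions together make this sum nonpositive, so they hold only for
`α = 1, γ = 0`. A longitudinal exponent `γ₀ = α` would then have to be both `1` and `0`.
-/

section Exponents

variable {R ι : Type*} [CommRing R]

theorem exponent_constraint_sub_two_mul_criterion (n α : R) (s : Finset ι) (γ : ι → R) :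
    ((n - 1) * (α ^ 2 + ∑ a ∈ s, γ a ^ 2) + (α + ∑ a ∈ s, γ a) ^ 2)
        - 2 * (n * α + ∑ a ∈ s, γ a) + n =
      (n - 1) * ((α - 1) ^ 2 + ∑ a ∈ s, γ a ^ 2) + (α + ∑ a ∈ s, γ a - 1) ^ 2 := by
  ring

variable [LinearOrder R] [IsStrictOrderedRing R] {n α : R} {s : Finset ι} {γ : ι → R}

theorem eq_one_and_eq_zero_of_exponent_constraint_of_criterion (hn : 1 < n)
    (hconstraint : (n - 1) * (α ^ 2 + ∑ a ∈ s, γ a ^ 2) + (α + ∑ a ∈ s, γ a) ^ 2 ≤ n)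
    (hcriterion : n ≤ n * α + ∑ a ∈ s, γ a) :
    α = 1 ∧ ∀ a ∈ s, γ a = 0 := by
  have hα : 0 ≤ (α - 1) ^ 2 := sq_nonneg _
  have hγ : 0 ≤ ∑ a ∈ s, γ a ^ 2 := Finset.sum_nonneg fun a _ ↦ sq_nonneg (γ a)
  have hweighted : (n - 1) * ((α - 1) ^ 2 + ∑ a ∈ s, γ a ^ 2) ≤ 0 := by
    linarith [exponent_constraint_sub_two_mul_criterion n α s γ,
      sq_nonneg (α + ∑ a ∈ s, γ a - 1)]
  have hsum : (α - 1) ^ 2 + ∑ a ∈ s, γ a ^ 2 ≤ 0 :=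
    nonpos_of_mul_nonpos_right hweighted (sub_pos.mpr hn)
  have hα_zero : (α - 1) ^ 2 = 0 := by linarith
  have hγ_zero : ∑ a ∈ s, γ a ^ 2 = 0 := by linarith
  rw [Finset.sum_eq_zero_iff_of_nonneg fun a _ ↦ sq_nonneg (γ a)] at hγ_zero
  exact ⟨sub_eq_zero.mp (sq_eq_zero_iff.mp hα_zero), fun a ha ↦ sq_eq_zero_iff.mp (hγ_zero a ha)⟩

theorem stmt_2_general (hn : 1 < n)
    (hconstraint : (n - 1) * (2 * α ^ 2 + ∑ a ∈ s, γ a ^ 2) + (2 * α + ∑ a ∈ s, γ a) ^ 2 ≤ n) :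
    (n + 1) * α + ∑ a ∈ s, γ a < n := by
  by_contra! hcriterion
  -- The index `none` carries the longitudinal exponent `γ₀ = α`.
  let γ' : Option ι → R := fun a ↦ a.elim α γ
  have hsum : ∑ a ∈ s.insertNone, γ' a = α + ∑ a ∈ s, γ a := Finset.sum_insertNone γ' s
  have hsum_sq : ∑ a ∈ s.insertNone, γ' a ^ 2 = α ^ 2 + ∑ a ∈ s, γ a ^ 2 :=
    Finset.sum_insertNone (fun a ↦ γ' a ^ 2) s
  obtain ⟨hα_one, hγ'_zero⟩ : α = 1 ∧ ∀ a ∈ s.insertNone, γ' a = 0 := by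
    apply eq_one_and_eq_zero_of_exponent_constraint_of_criterion hn
    · rw [hsum, hsum_sq]
      linarith
    · rw [hsum]
      linarith
  have hα_zero : α = 0 := hγ'_zero none Finset.none_mem_insertNone
  exact zero_ne_one (hα_zero.symm.trans hα_one)

end Exponents

/-- Algebraic core of the no-go theorem for horizons in metrics with a null
Killing vector: for `n ≥ 2` there are no real exponents `α, γ₁, …, γ_m` with
`(n−1)(2α² + Σγ_a²) + (2α + Σγ_a)² = n` and `(n+1)α + Σγ_a ≥ n`. -/
theorem stmt_2 (n : ℕ) (hn : 2 ≤ n) :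
    ¬ ∃ (m : ℕ) (α : ℝ) (γ : Fin m → ℝ),
      ((n : ℝ) - 1) * (2 * α ^ 2 + ∑ a, (γ a) ^ 2) + (2 * α + ∑ a, γ a) ^ 2 = n ∧
      ((n : ℝ) + 1) * α + ∑ a, γ a ≥ n := by
  rintro ⟨m, α, γ, hconstraint, hcriterion⟩
  exact (stmt_2_general (Nat.one_lt_cast.mpr hn) hconstraint.le).not_ge hcriterion
end

section
/- Let n ≥ 2 be an integer, r₀ > 0, and define on (r₀, ∞) the functions g(r) = 1 − (r₀/r)^{2(n−1)} and f(r) = (1 − (r₀/r)^{n−1})/(1 + (r₀/r)^{n−1}). Then for every r > r₀ one has the identity (g′(r)/g(r))·(g′(r)/g(r) + 2(n−1)/r) = (f′(r)/f(r))². -/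
/-!
Put `u(r) = (r₀/r)^(n-1)`, so that `g = (1 - u)(1 + u)` and `f = (1 - u)/(1 + u)`. With `a` and `b`
the logarithmic derivatives of `1 - u` and `1 + u`, those of `g` and `f` are `a + b` and `a - b`.
As `(a + b)² - (a - b)² = 4ab`, the identity amounts to `2ab = -((n-1)/r)(a + b)`, which follows
from the differential equation `u' = -(n-1)u/r`.
-/

lemma hasDerivAt_const_div_pow {𝕜 : Type*} [NontriviallyNormedField 𝕜] {x : 𝕜} (c : 𝕜) (k : ℕ)
    (hx : x ≠ 0) :
    HasDerivAt (fun y ↦ (c / y) ^ k) (-(k / x) * (c / x) ^ k) x := by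
  have hdiv : HasDerivAt (fun y ↦ c / y) (-(c / x) / x) x := by
    refine ((hasDerivAt_const x c).fun_div (hasDerivAt_id' x) hx).congr_deriv ?_
    field_simp
    ring
  refine (hdiv.fun_pow k).congr_deriv ?_
  cases k with
  | zero => simp
  | succ k =>
    rw [Nat.add_sub_cancel, pow_succ]
    ring

section LogDeriv

variable {𝕜 𝕜' : Type*} [NontriviallyNormedField 𝕜] [NontriviallyNormedField 𝕜']
  [NormedAlgebra 𝕜 𝕜'] {u : 𝕜 → 𝕜'} {x : 𝕜} {p : 𝕜'}

lemma logDeriv_one_sub_sq (hu : DifferentiableAt 𝕜 u x) (hsub : 1 - u x ≠ 0)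
    (hadd : 1 + u x ≠ 0) :
    logDeriv (fun y ↦ 1 - u y ^ 2) x =
      logDeriv (fun y ↦ 1 - u y) x + logDeriv (fun y ↦ 1 + u y) x := by
  rw [← logDeriv_mul x hsub hadd (hu.const_sub 1) (hu.const_add 1)]
  congr 1
  ext y
  ring

lemma two_mul_logDeriv_one_sub_mul_logDeriv_one_add (hu : HasDerivAt u (-p * u x) x)
    (hsub : 1 - u x ≠ 0) (hadd : 1 + u x ≠ 0) :
    2 * (logDeriv (fun y ↦ 1 - u y) x * logDeriv (fun y ↦ 1 + u y) x) =
      -p * (logDeriv (fun y ↦ 1 - u y) x + logDeriv (fun y ↦ 1 + u y) x) := by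
  simp only [logDeriv_apply, (hu.const_sub 1).deriv, (hu.const_add 1).deriv]
  field_simp
  ring

lemma logDeriv_one_sub_sq_mul_add (hu : HasDerivAt u (-p * u x) x)
    (hsub : 1 - u x ≠ 0) (hadd : 1 + u x ≠ 0) :
    logDeriv (fun y ↦ 1 - u y ^ 2) x * (logDeriv (fun y ↦ 1 - u y ^ 2) x + 2 * p) =
      logDeriv (fun y ↦ (1 - u y) / (1 + u y)) x ^ 2 := by
  have hdiff := hu.differentiableAt
  rw [logDeriv_one_sub_sq hdiff hsub hadd,
    logDeriv_div x hsub hadd (hdiff.const_sub 1) (hdiff.const_add 1)]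
  linear_combination 2 * two_mul_logDeriv_one_sub_mul_logDeriv_one_add hu hsub hadd

end LogDeriv

lemma one_sub_div_pow_pos {K : Type*} [Field K] [LinearOrder K] [IsStrictOrderedRing K] {a b : K}
    {k : ℕ} (ha : 0 ≤ a) (hab : a < b) (hk : k ≠ 0) : 0 < 1 - (a / b) ^ k :=
  have hb : 0 < b := ha.trans_lt hab
  sub_pos.mpr (pow_lt_one₀ (div_nonneg ha hb.le) ((div_lt_one hb).mpr hab) hk)

theorem stmt_5_general {𝕜 : Type*} [NontriviallyNormedField 𝕜] (n : ℕ) (r₀ : 𝕜) (g f : 𝕜 → 𝕜)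
    (hg : ∀ r, g r = 1 - (r₀ / r) ^ (2 * (n - 1)))
    (hf : ∀ r, f r = (1 - (r₀ / r) ^ (n - 1)) / (1 + (r₀ / r) ^ (n - 1)))
    (r : 𝕜) (hr : r ≠ 0) (hgr : g r ≠ 0) :
    (deriv g r / g r) * (deriv g r / g r + 2 * ((n : 𝕜) - 1) / r) = (deriv f r / f r) ^ 2 := by
  have hg_sq : g = fun y ↦ 1 - ((r₀ / y) ^ (n - 1)) ^ 2 := by
    ext y
    rw [hg, pow_mul']
  have hfactor : (1 - (r₀ / r) ^ (n - 1)) * (1 + (r₀ / r) ^ (n - 1)) ≠ 0 := by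
    convert hgr using 1
    rw [hg_sq]
    ring
  obtain ⟨hsub, hadd⟩ := mul_ne_zero_iff.mp hfactor
  have hn : 1 ≤ n := by
    by_contra! hlt
    simp [Nat.lt_one_iff.mp hlt] at hsub
  rw [← logDeriv_apply, ← logDeriv_apply, hg_sq, funext hf, mul_div_assoc, ← Nat.cast_pred hn]
  exact logDeriv_one_sub_sq_mul_add (hasDerivAt_const_div_pow r₀ (n - 1) hr) hsub hadd

/-- The blackening functions `g(r) = 1 − (r₀/r)^{2(n−1)}` and
`f(r) = (1 − (r₀/r)^{n−1})/(1 + (r₀/r)^{n−1})` satisfy, for `r > r₀ > 0` and `n ≥ 2`,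
the identity `(g′/g)(g′/g + 2(n−1)/r) = (f′/f)²`. -/
theorem stmt_5 (n : ℕ) (hn : 2 ≤ n) (r₀ : ℝ) (hr₀ : 0 < r₀)
    (g f : ℝ → ℝ)
    (hg : ∀ r, g r = 1 - (r₀ / r) ^ (2 * (n - 1)))
    (hf : ∀ r, f r = (1 - (r₀ / r) ^ (n - 1)) / (1 + (r₀ / r) ^ (n - 1))) :
    ∀ r, r₀ < r →
      (deriv g r / g r) * (deriv g r / g r + 2 * ((n : ℝ) - 1) / r)
        = (deriv f r / f r) ^ 2 := by
  intro r hr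
  exact stmt_5_general n r₀ g f hg hf r (hr₀.trans hr).ne'
    (hg r ▸ (one_sub_div_pow_pos hr₀.le hr (by lia)).ne')
end

section
/- Let L, μ, c₀, 𝒬 be real numbers and define, for r > 0 and (x, y) ∈ ℝ², the function 𝓗(r, x, y) = c₀ + 𝒬/r⁴ − (μ²/16)(r² + x² + y² + L⁴/r²). Then 𝓗 satisfies the equation ∂_r²𝓗 + (5/r)∂_r𝓗 + (1 + L⁴/r⁴)(∂_x²𝓗 + ∂_y²𝓗) = −μ² for all r > 0 and all x, y. -/
/-!
On functions of `r = |z|`, `z ∈ ℝ⁶`, the Laplacian sends `rⁿ` to `n (n + 4) rⁿ⁻²`. Hence `𝒬/r⁴` is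
harmonic, `r²` contributes the constant `12`, and `L⁴/r²` contributes `-4 L⁴/r⁴`. The latter cancels
against `(1 + L⁴/r⁴)(∂_x² + ∂_y²)(x² + y²) = 4 + 4 L⁴/r⁴`, so that only `-(μ²/16)(12 + 4) = -μ²`
survives.
-/

section RadialLaplacian

/-- The radial part `f'' + ((d - 1) / r) f'` of the Laplacian on `ℝᵈ`, used to express how the
Laplacian acts on `z ↦ f ‖z‖`. The dimension `d` is allowed to be any real number. -/
noncomputable def radialLaplacian (d : ℝ) (f : ℝ → ℝ) (r : ℝ) : ℝ :=
  deriv (deriv f) r + (d - 1) / r * deriv f r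

variable (d : ℝ) {r : ℝ}

theorem radialLaplacian_const_add (c : ℝ) (f : ℝ → ℝ) :
    radialLaplacian d (fun s => c + f s) r = radialLaplacian d f r := by
  simp only [radialLaplacian, deriv_const_add']

theorem radialLaplacian_const_mul (c : ℝ) (f : ℝ → ℝ) :
    radialLaplacian d (fun s => c * f s) r = c * radialLaplacian d f r := by
  simp only [radialLaplacian, deriv_const_mul_field']
  ring

theorem radialLaplacian_add {f g : ℝ → ℝ} (hf : ContDiffAt ℝ 2 f r) (hg : ContDiffAt ℝ 2 g r) :
    radialLaplacian d (fun s => f s + g s) r = radialLaplacian d f r + radialLaplacian d g r := by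
  have first : deriv (fun s => f s + g s) r = deriv f r + deriv g r :=
    deriv_fun_add (hf.differentiableAt two_ne_zero) (hg.differentiableAt two_ne_zero)
  have second : deriv (deriv fun s => f s + g s) r = deriv (deriv f) r + deriv (deriv g) r := by
    simpa only [iteratedDeriv_succ, iteratedDeriv_zero] using iteratedDeriv_fun_add hf hg
  rw [radialLaplacian, first, second, radialLaplacian, radialLaplacian]
  ring

theorem radialLaplacian_zpow (n : ℤ) (hr : r ≠ 0) :
    radialLaplacian d (fun s => s ^ n) r = n * (n + d - 2) * r ^ (n - 2) := by
  have second : deriv (deriv fun s : ℝ => s ^ n) r = n * ((n - 1) * r ^ (n - 2)) := by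
    rw [deriv_zpow', deriv_const_mul_field, deriv_zpow, sub_sub]
    push_cast
    norm_num
  have lower : r ^ (n - 1) = r ^ (n - 2) * r := by
    rw [← zpow_add_one₀ hr]
    ring_nf
  rw [radialLaplacian, second, deriv_zpow, lower]
  field_simp
  ring

end RadialLaplacian

theorem deriv_deriv_const_add_mul_sq {𝕜 : Type*} [NontriviallyNormedField 𝕜] (a c x : 𝕜) :
    deriv (deriv fun u => a + c * u ^ 2) x = 2 * c := by
  simp [mul_comm]

/-- The plane-wave function `𝓗(r, x, y)` of the D3-brane, where `r` is the distance to the brane in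
the transverse `ℝ⁶`. At `r = 0` it takes a junk value. -/
noncomputable def planeWave (L μ c₀ Q r x y : ℝ) : ℝ :=
  c₀ + Q / r ^ 4 - (μ ^ 2 / 16) * (r ^ 2 + x ^ 2 + y ^ 2 + L ^ 4 / r ^ 2)

namespace planeWave

variable (L μ c₀ Q r x y : ℝ)

theorem eq_laurent : (fun s => planeWave L μ c₀ Q s x y) = fun s =>
    (c₀ - μ ^ 2 / 16 * (x ^ 2 + y ^ 2)) + (Q * s ^ (-4 : ℤ) +
      (-(μ ^ 2 / 16) * s ^ (2 : ℤ) + -(μ ^ 2 / 16) * L ^ 4 * s ^ (-2 : ℤ))) := by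
  funext s
  simp only [planeWave, zpow_neg, zpow_ofNat, div_eq_mul_inv]
  ring

theorem radialLaplacian_eq (hr : r ≠ 0) :
    radialLaplacian 6 (fun s => planeWave L μ c₀ Q s x y) r
      = -(μ ^ 2 / 4) * (3 - L ^ 4 / r ^ 4) := by
  have smooth (b : ℝ) (n : ℤ) : ContDiffAt ℝ 2 (fun s : ℝ => b * s ^ n) r :=
    contDiffAt_const.mul (analyticAt_id.fun_zpow hr).contDiffAt
  have harmonic : radialLaplacian 6 (fun s => s ^ (-4 : ℤ)) r = 0 := by
    rw [radialLaplacian_zpow 6 _ hr]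
    norm_num
  have quadratic : radialLaplacian 6 (fun s => s ^ (2 : ℤ)) r = 12 := by
    rw [radialLaplacian_zpow 6 _ hr]
    norm_num
  have inverse_sq : radialLaplacian 6 (fun s => s ^ (-2 : ℤ)) r = -4 / r ^ 4 := by
    rw [radialLaplacian_zpow 6 _ hr]
    norm_num [zpow_neg, div_eq_mul_inv]
  rw [eq_laurent, radialLaplacian_const_add,
    radialLaplacian_add 6 (smooth _ _) ((smooth _ _).add (smooth _ _)),
    radialLaplacian_add 6 (smooth _ _) (smooth _ _)]
  simp only [radialLaplacian_const_mul, harmonic, quadratic, inverse_sq]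
  ring

theorem deriv_deriv_x :
    deriv (deriv fun u => planeWave L μ c₀ Q r u y) x = -(μ ^ 2 / 8) := by
  have profile : (fun u => planeWave L μ c₀ Q r u y)
      = fun u => planeWave L μ c₀ Q r 0 y + -(μ ^ 2 / 16) * u ^ 2 := by
    funext u
    simp only [planeWave]
    ring
  rw [profile, deriv_deriv_const_add_mul_sq]
  ring

theorem swap_xy : planeWave L μ c₀ Q r x y = planeWave L μ c₀ Q r y x := by
  simp only [planeWave, add_right_comm]

theorem deriv_deriv_y :
    deriv (deriv fun v => planeWave L μ c₀ Q r x v) y = -(μ ^ 2 / 8) := by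
  simpa only [swap_xy L μ c₀ Q r x] using deriv_deriv_x L μ c₀ Q r y x

end planeWave

/-- The plane-wave function for the 𝓗-deformed D3 (+,−,1,1) brane:
`𝓗(r,x,y) = c₀ + 𝒬/r⁴ − (μ²/16)(r² + x² + y² + L⁴/r²)` satisfies
`∂_r²𝓗 + (5/r)∂_r𝓗 + (1 + L⁴/r⁴)(∂_x²𝓗 + ∂_y²𝓗) = −μ²` for all `r > 0`, `x`, `y`. -/
theorem stmt_10 (L μ c₀ Q : ℝ) (H : ℝ → ℝ → ℝ → ℝ)
    (hH : ∀ r x y, H r x y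
        = c₀ + Q / r ^ 4 - (μ ^ 2 / 16) * (r ^ 2 + x ^ 2 + y ^ 2 + L ^ 4 / r ^ 2)) :
    ∀ r x y : ℝ, 0 < r →
      deriv (deriv (fun s => H s x y)) r + (5 / r) * deriv (fun s => H s x y) r
        + (1 + L ^ 4 / r ^ 4) *
            (deriv (deriv (fun u => H r u y)) x + deriv (deriv (fun v => H r x v)) y)
        = -μ ^ 2 := by
  obtain rfl : H = planeWave L μ c₀ Q := by
    funext r x y
    exact hH r x y
  intro r x y hr
  have radial := planeWave.radialLaplacian_eq L μ c₀ Q r x y hr.ne'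
  rw [radialLaplacian, (by norm_num : (6 - 1 : ℝ) = 5)] at radial
  rw [radial, planeWave.deriv_deriv_x, planeWave.deriv_deriv_y]
  ring
end

section
/- Let r₀ > 0, λ ≠ 0, and L, c real. Define on (r₀, ∞): f(r) = (1 − (r₀/r)⁴)/(1 + (r₀/r)⁴), g(r) = 1 − (r₀/r)⁸, and H(r) = (L⁴/(2λr₀⁴))·sinh(c − λ log f(r)). Then for all r > r₀, (H′(r))² − λ²·H(r)²·(f′(r)/f(r))² = 16L⁸/(r¹⁰ g(r)²). -/
/-!
Write `H = A sinh φ` with `φ = c - λ log f`. Since `φ' = -λ f'/f`, the identity `cosh² - sinh² = 1`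
collapses the left-hand side to `(A φ')²`, in which `H` no longer appears. As `f = (1 - u)/(1 + u)`
for `u = (r₀/r)ⁿ`, its logarithmic derivative is `-2u'/(1 - u²) = 2nu/(rg)`.
-/

section LogDeriv

variable {𝕜 : Type*} [NontriviallyNormedField 𝕜]

theorem deriv_const_div_pow (a : 𝕜) (n : ℕ) {x : 𝕜} (hx : x ≠ 0) :
    deriv (fun y ↦ (a / y) ^ n) x = -(n * (a / x) ^ n / x) := by
  have hdiv : HasDerivAt (fun y ↦ a / y) (-(a / x) / x) x := by
    refine ((hasDerivAt_const x a).fun_div (hasDerivAt_id x) hx).congr_deriv ?_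
    simp only [id]
    field_simp
    ring
  rw [(hdiv.fun_pow n).deriv]
  cases n with
  | zero => simp
  | succ k =>
    rw [Nat.add_sub_cancel, pow_succ]
    ring

theorem logDeriv_one_sub_div_one_add {u : 𝕜 → 𝕜} {x : 𝕜} (hu : DifferentiableAt 𝕜 u x)
    (hux : 1 - u x ^ 2 ≠ 0) :
    logDeriv (fun y ↦ (1 - u y) / (1 + u y)) x = -2 * deriv u x / (1 - u x ^ 2) := by
  have hfactor : 1 - u x ^ 2 = (1 - u x) * (1 + u x) := by ring
  have hsub : 1 - u x ≠ 0 := left_ne_zero_of_mul (hfactor ▸ hux)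
  have hadd : 1 + u x ≠ 0 := right_ne_zero_of_mul (hfactor ▸ hux)
  rw [logDeriv_div x hsub hadd (hu.const_sub 1) (hu.const_add 1), logDeriv_apply, logDeriv_apply,
    deriv_const_sub, deriv_const_add, hfactor]
  field_simp
  ring

theorem logDeriv_one_sub_pow_div_one_add_pow (a : 𝕜) (n : ℕ) {x : 𝕜} (hx : x ≠ 0)
    (hax : 1 - (a / x) ^ (2 * n) ≠ 0) :
    logDeriv (fun y ↦ (1 - (a / y) ^ n) / (1 + (a / y) ^ n)) x =
      2 * n * (a / x) ^ n / (x * (1 - (a / x) ^ (2 * n))) := by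
  have hsq : (a / x) ^ (2 * n) = ((a / x) ^ n) ^ 2 := pow_mul' _ _ _
  have hdiff : DifferentiableAt 𝕜 (fun y ↦ (a / y) ^ n) x := by fun_prop (disch := assumption)
  rw [logDeriv_one_sub_div_one_add hdiff (hsq ▸ hax), deriv_const_div_pow a n hx, ← hsq]
  field_simp

end LogDeriv

theorem deriv_const_mul_sinh_sq_sub {φ : ℝ → ℝ} {x : ℝ} (A : ℝ) (hφ : DifferentiableAt ℝ φ x) :
    deriv (fun y ↦ A * Real.sinh (φ y)) x ^ 2 - (A * Real.sinh (φ x)) ^ 2 * deriv φ x ^ 2 =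
      (A * deriv φ x) ^ 2 := by
  rw [(hφ.hasDerivAt.sinh.const_mul A).deriv]
  linear_combination (A * deriv φ x) ^ 2 * Real.cosh_sq (φ x)

theorem deriv_const_mul_sinh_log_sq_sub {f : ℝ → ℝ} {x : ℝ} (A lam c : ℝ)
    (hf : DifferentiableAt ℝ f x) (hfx : f x ≠ 0) :
    deriv (fun y ↦ A * Real.sinh (c - lam * Real.log (f y))) x ^ 2 -
        lam ^ 2 * (A * Real.sinh (c - lam * Real.log (f x))) ^ 2 * logDeriv f x ^ 2 =
      (A * lam * logDeriv f x) ^ 2 := by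
  have hphase : HasDerivAt (fun y ↦ c - lam * Real.log (f y)) (-(lam * logDeriv f x)) x :=
    ((hf.hasDerivAt.log hfx).const_mul lam).const_sub c
  have hsinh := deriv_const_mul_sinh_sq_sub A hphase.differentiableAt
  rw [hphase.deriv] at hsinh
  linear_combination hsinh

/-- The number of transverse dimensions is `n + 2`, so that `n = 4` for the fundamental string and
the extremal harmonic function is `1 + Lⁿ / rⁿ`. -/
theorem stmt_13_general {n : ℕ} (hn : n ≠ 0) {r₀ lam : ℝ} (L c : ℝ) (hr₀ : r₀ ≠ 0) (hlam : lam ≠ 0)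
    {f g H : ℝ → ℝ}
    (hf : ∀ r, f r = (1 - (r₀ / r) ^ n) / (1 + (r₀ / r) ^ n))
    (hg : ∀ r, g r = 1 - (r₀ / r) ^ (2 * n))
    (hH : ∀ r, H r = L ^ n / (2 * lam * r₀ ^ n) * Real.sinh (c - lam * Real.log (f r)))
    {r : ℝ} (hr : |r₀| < |r|) :
    deriv H r ^ 2 - lam ^ 2 * H r ^ 2 * (deriv f r / f r) ^ 2 =
      n ^ 2 * L ^ (2 * n) / (r ^ (2 * n + 2) * g r ^ 2) := by
  have hr_ne : r ≠ 0 := abs_pos.1 ((abs_nonneg r₀).trans_lt hr)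
  have hu : |(r₀ / r) ^ n| < 1 := by
    rw [abs_pow, abs_div]
    exact pow_lt_one₀ (by positivity) ((div_lt_one (abs_pos.2 hr_ne)).2 hr) hn
  obtain ⟨hu_gt, hu_lt⟩ := abs_lt.1 hu
  have hsub : 1 - (r₀ / r) ^ n ≠ 0 := by linarith
  have hadd : 1 + (r₀ / r) ^ n ≠ 0 := by linarith
  have hg_ne : 1 - (r₀ / r) ^ (2 * n) ≠ 0 := by
    rw [show 1 - (r₀ / r) ^ (2 * n) = (1 - (r₀ / r) ^ n) * (1 + (r₀ / r) ^ n) by ring]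
    exact mul_ne_zero hsub hadd
  have hlog : logDeriv f r = 2 * n * (r₀ / r) ^ n / (r * g r) := by
    rw [funext hf, hg, logDeriv_one_sub_pow_div_one_add_pow r₀ n hr_ne hg_ne]
  have hf_diff : DifferentiableAt ℝ f r := by
    rw [funext hf]
    fun_prop (disch := assumption)
  have hf_ne : f r ≠ 0 := hf r ▸ div_ne_zero hsub hadd
  rw [← hg] at hg_ne
  rw [← logDeriv_apply, hH r, funext hH, deriv_const_mul_sinh_log_sq_sub _ _ _ hf_diff hf_ne, hlog,
    div_pow r₀]
  field_simp
  ring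

/-- The first-order equation solved by `H = e^{−8Â/3}` for the non-extremal
fundamental string deformation: with `f(r) = (1 − (r₀/r)⁴)/(1 + (r₀/r)⁴)`,
`g(r) = 1 − (r₀/r)⁸` and `H(r) = (L⁴/(2lamr₀⁴)) sinh(c − lam log f(r))`, one has
`(H′)² − lam²H²(f′/f)² = 16L⁸/(r¹⁰g²)` for all `r > r₀`. -/
theorem stmt_13 (r₀ lam L c : ℝ) (hr₀ : 0 < r₀) (hlam : lam ≠ 0)
    (f g H : ℝ → ℝ)
    (hf : ∀ r, f r = (1 - (r₀ / r) ^ 4) / (1 + (r₀ / r) ^ 4))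
    (hg : ∀ r, g r = 1 - (r₀ / r) ^ 8)
    (hH : ∀ r, H r = (L ^ 4 / (2 * lam * r₀ ^ 4)) * Real.sinh (c - lam * Real.log (f r))) :
    ∀ r, r₀ < r →
      (deriv H r) ^ 2 - lam ^ 2 * (H r) ^ 2 * (deriv f r / f r) ^ 2
        = 16 * L ^ 8 / (r ^ 10 * (g r) ^ 2) := by
  intro r hr
  have hr_abs : |r₀| < |r| := by rwa [abs_of_pos hr₀, abs_of_pos (hr₀.trans hr)]
  exact (stmt_13_general four_ne_zero L c hr₀.ne' hlam hf hg hH hr_abs).trans (by norm_num)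
end

section
/- For all real numbers γ, δ, λ satisfying λ² = 3 − 8δ² + 8δγ − 4γ², one has 2δ − |λ| < 3. Equivalently, there exist no real γ, δ, λ with λ² = 3 − 8δ² + 8δγ − 4γ² and −|λ| + 2δ ≥ 3. -/
section ExponentConstraint

variable {R : Type*} [CommRing R]

theorem sq_add_sq_add_sq_eq_of_sq_eq {γ δ lam c : R}
    (h : lam ^ 2 = c - 8 * δ ^ 2 + 8 * δ * γ - 4 * γ ^ 2) :
    lam ^ 2 + (2 * (δ - γ)) ^ 2 + (2 * δ) ^ 2 = c := by
  linear_combination h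

variable [LinearOrder R] [IsStrictOrderedRing R]

theorem two_mul_sq_le_of_sq_eq {γ δ lam c : R}
    (h : lam ^ 2 = c - 8 * δ ^ 2 + 8 * δ * γ - 4 * γ ^ 2) :
    (2 * δ) ^ 2 ≤ c :=
  calc (2 * δ) ^ 2
      ≤ lam ^ 2 + (2 * (δ - γ)) ^ 2 + (2 * δ) ^ 2 := le_add_of_nonneg_left (by positivity)
    _ = c := sq_add_sq_add_sq_eq_of_sq_eq h

theorem two_mul_sub_abs_lt_of_sq_eq {γ δ lam c a : R}
    (h : lam ^ 2 = c - 8 * δ ^ 2 + 8 * δ * γ - 4 * γ ^ 2) (ha : 0 ≤ a) (hca : c < a ^ 2) :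
    2 * δ - |lam| < a :=
  calc 2 * δ - |lam|
      ≤ 2 * δ := sub_le_self _ (abs_nonneg lam)
    _ < a := lt_of_pow_lt_pow_left₀ 2 ha ((two_mul_sq_le_of_sq_eq h).trans_lt hca)

theorem stmt_17_general {γ δ lam : R}
    (h : lam ^ 2 = 3 - 8 * δ ^ 2 + 8 * δ * γ - 4 * γ ^ 2) :
    2 * δ - |lam| < 3 :=
  two_mul_sub_abs_lt_of_sq_eq h (by norm_num) (by norm_num)

end ExponentConstraint

/-- For the non-extremal D3 (+,−,2,0) deformation: whenever
`λ² = 3 − 8δ² + 8δγ − 4γ²`, one has `2δ − |λ| < 3`; equivalently there are no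
real `γ, δ, λ` with `λ² = 3 − 8δ² + 8δγ − 4γ²` and `−|λ| + 2δ ≥ 3`. -/
theorem stmt_17 :
    (∀ γ δ lam : ℝ, lam ^ 2 = 3 - 8 * δ ^ 2 + 8 * δ * γ - 4 * γ ^ 2 →
      2 * δ - |lam| < 3) ∧
    (¬ ∃ γ δ lam : ℝ, lam ^ 2 = 3 - 8 * δ ^ 2 + 8 * δ * γ - 4 * γ ^ 2 ∧
      -|lam| + 2 * δ ≥ 3) :=
  ⟨fun _ _ _ h ↦ stmt_17_general h,
    fun ⟨_, _, _, h, hge⟩ ↦ by linarith only [stmt_17_general h, hge]⟩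
end

section
/- Let Q₁ > 0, λ₁ > 0, r₀ > 0, and let c₁ be the real number with sinh c₁ = 2λ₁r₀²/Q₁. Define on (r₀, ∞): f(r) = (1 − (r₀/r)²)/(1 + (r₀/r)²) and H₁(r) = (Q₁/(2λ₁r₀²))·sinh(c₁ − λ₁ log f(r)). Then H₁(r) → 1 as r → ∞, and moreover lim_{r→∞} r²·(H₁(r) − 1) = √(Q₁² + 4λ₁²r₀⁴). -/
open Filter Topology

/-!
In the variable `x = (r₀/r)²` the deformed harmonic function is
`A sinh (c - λ log ((1 - x) / (1 + x)))`, which is smooth at `x = 0`, the point corresponding to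
`r = ∞`. Hence the coefficient of `1/r²` at infinity is `r₀²` times the derivative at `0`, namely
`2 A λ r₀² cosh c`. With `A = Q / (2 λ r₀²)` this is `Q cosh c`, and `Q sinh c = 2 λ r₀²` turns it
into `√(Q² + 4 λ² r₀⁴)` through `cosh² = 1 + sinh²`.
-/

theorem tendsto_const_div_pow_atTop_nhds_zero {𝕜 : Type*} [Field 𝕜] [LinearOrder 𝕜]
    [IsStrictOrderedRing 𝕜] [TopologicalSpace 𝕜] [OrderTopology 𝕜] (a : 𝕜) {n : ℕ} (hn : n ≠ 0) :
    Tendsto (fun r : 𝕜 => (a / r) ^ n) atTop (𝓝 0) := by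
  simpa only [id, zero_pow hn] using (tendsto_id.const_div_atTop a).pow n

theorem tendsto_pow_smul_sub_atTop_of_hasDerivAt {E : Type*} [NormedAddCommGroup E]
    [NormedSpace ℝ E] {g : ℝ → E} {g' : E} {x : ℝ} (hg : HasDerivAt g g' x) (a : ℝ)
    {n : ℕ} (hn : n ≠ 0) :
    Tendsto (fun r : ℝ => r ^ n • (g (x + (a / r) ^ n) - g x)) atTop (𝓝 (a ^ n • g')) := by
  have hpow : Tendsto (fun r : ℝ => ‖r ^ n‖) atTop atTop :=
    tendsto_norm_atTop_atTop.comp (tendsto_pow_atTop hn)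
  refine (hg.hasFDerivAt.lim (a ^ n) hpow).congr fun r => ?_
  rw [smul_eq_mul, div_pow, inv_mul_eq_div]

theorem hasDerivAt_log_one_sub_div_one_add {x : ℝ} (h₁ : 1 - x ≠ 0) (h₂ : 1 + x ≠ 0) :
    HasDerivAt (fun y => Real.log ((1 - y) / (1 + y))) (-2 / ((1 - x) * (1 + x))) x := by
  have hquot : HasDerivAt (fun y : ℝ => (1 - y) / (1 + y)) (-2 / (1 + x) ^ 2) x :=
    (((hasDerivAt_id' x).const_sub 1).fun_div ((hasDerivAt_id' x).const_add 1) h₂).congr_deriv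
      (by ring)
  refine (hquot.log (div_ne_zero h₁ h₂)).congr_deriv ?_
  field_simp

theorem sqrt_sq_add_mul_sinh_sq {q : ℝ} (hq : 0 ≤ q) (c : ℝ) :
    √(q ^ 2 + (q * Real.sinh c) ^ 2) = q * Real.cosh c := by
  have hsq : q ^ 2 + (q * Real.sinh c) ^ 2 = (q * Real.cosh c) ^ 2 := by
    linear_combination -q ^ 2 * Real.cosh_sq c
  rw [hsq, Real.sqrt_sq (mul_nonneg hq (Real.cosh_pos c).le)]

/-- The "harmonic function" of the non-extremal deformation with amplitude `A`, as a function of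
`x = (r₀ / r) ^ 2`, so that spatial infinity is `x = 0` and the horizon `r = r₀` is `x = 1`. -/
noncomputable def deformedHarmonic (A lam c x : ℝ) : ℝ :=
  A * Real.sinh (c - lam * Real.log ((1 - x) / (1 + x)))

section DeformedHarmonic

variable (A lam c : ℝ)

theorem deformedHarmonic_zero : deformedHarmonic A lam c 0 = A * Real.sinh c := by
  simp [deformedHarmonic]

theorem hasDerivAt_deformedHarmonic {x : ℝ} (h₁ : 1 - x ≠ 0) (h₂ : 1 + x ≠ 0) :
    HasDerivAt (deformedHarmonic A lam c)
      (2 * A * lam * Real.cosh (c - lam * Real.log ((1 - x) / (1 + x))) / ((1 - x) * (1 + x)))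
      x := by
  have hlog := hasDerivAt_log_one_sub_div_one_add h₁ h₂
  exact (((hlog.const_mul lam).const_sub c).sinh.const_mul A).congr_deriv (by ring)

theorem hasDerivAt_deformedHarmonic_zero :
    HasDerivAt (deformedHarmonic A lam c) (2 * A * lam * Real.cosh c) 0 := by
  simpa using hasDerivAt_deformedHarmonic A lam c (x := 0) (by simp) (by simp)

theorem tendsto_deformedHarmonic_atTop (r₀ : ℝ) :
    Tendsto (fun r => deformedHarmonic A lam c ((r₀ / r) ^ 2)) atTop (𝓝 (A * Real.sinh c)) := by
  rw [← deformedHarmonic_zero A lam c]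
  exact (hasDerivAt_deformedHarmonic_zero A lam c).continuousAt.tendsto.comp
    (tendsto_const_div_pow_atTop_nhds_zero r₀ two_ne_zero)

theorem tendsto_sq_mul_deformedHarmonic_sub_atTop (r₀ : ℝ) :
    Tendsto (fun r => r ^ 2 * (deformedHarmonic A lam c ((r₀ / r) ^ 2) - A * Real.sinh c)) atTop
      (𝓝 (r₀ ^ 2 * (2 * A * lam * Real.cosh c))) := by
  simpa only [zero_add, smul_eq_mul, deformedHarmonic_zero] using
    tendsto_pow_smul_sub_atTop_of_hasDerivAt (hasDerivAt_deformedHarmonic_zero A lam c) r₀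
      two_ne_zero

end DeformedHarmonic

/-- Charge renormalization in the non-extremal D1-D5 deformation: with
`f(r) = (1 − (r₀/r)²)/(1 + (r₀/r)²)` and
`H₁(r) = (Q₁/(2λ₁r₀²)) sinh(c₁ − λ₁ log f(r))`, where `sinh c₁ = 2λ₁r₀²/Q₁`,
one has `H₁(r) → 1` as `r → ∞` and `r²(H₁(r) − 1) → √(Q₁² + 4λ₁²r₀⁴)`. -/
theorem stmt_19 (Q₁ lam₁ r₀ c₁ : ℝ) (hQ : 0 < Q₁) (hlam : 0 < lam₁) (hr₀ : 0 < r₀)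
    (hc₁ : Real.sinh c₁ = 2 * lam₁ * r₀ ^ 2 / Q₁)
    (f H₁ : ℝ → ℝ)
    (hf : ∀ r, f r = (1 - (r₀ / r) ^ 2) / (1 + (r₀ / r) ^ 2))
    (hH₁ : ∀ r, H₁ r
        = (Q₁ / (2 * lam₁ * r₀ ^ 2)) * Real.sinh (c₁ - lam₁ * Real.log (f r))) :
    Tendsto H₁ atTop (𝓝 1) ∧
    Tendsto (fun r => r ^ 2 * (H₁ r - 1)) atTop
      (𝓝 (Real.sqrt (Q₁ ^ 2 + 4 * lam₁ ^ 2 * r₀ ^ 4))) := by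
  set A := Q₁ / (2 * lam₁ * r₀ ^ 2) with hA
  have hH : H₁ = fun r => deformedHarmonic A lam₁ c₁ ((r₀ / r) ^ 2) :=
    funext fun r => by rw [hH₁, hf, deformedHarmonic]
  have hnormalized : A * Real.sinh c₁ = 1 := by rw [hA, hc₁]; field_simp
  have hcharge : r₀ ^ 2 * (2 * A * lam₁ * Real.cosh c₁)
      = √(Q₁ ^ 2 + 4 * lam₁ ^ 2 * r₀ ^ 4) := by
    have hsinh : Q₁ * Real.sinh c₁ = 2 * lam₁ * r₀ ^ 2 := by rw [hc₁]; field_simp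
    calc r₀ ^ 2 * (2 * A * lam₁ * Real.cosh c₁) = Q₁ * Real.cosh c₁ := by rw [hA]; field_simp
      _ = √(Q₁ ^ 2 + (2 * lam₁ * r₀ ^ 2) ^ 2) := by
        rw [← hsinh, sqrt_sq_add_mul_sinh_sq hQ.le]
      _ = √(Q₁ ^ 2 + 4 * lam₁ ^ 2 * r₀ ^ 4) := by ring_nf
  have hlimit := tendsto_deformedHarmonic_atTop A lam₁ c₁ r₀
  have hcoeff := tendsto_sq_mul_deformedHarmonic_sub_atTop A lam₁ c₁ r₀
  rw [hnormalized, ← hH] at hlimit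
  rw [hnormalized, hcharge] at hcoeff
  exact ⟨hlimit, hH ▸ hcoeff⟩
end
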